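/- arXiv:2209.09942 — 4 statements merged into one kernel-verified Lean document; each statement's English description precedes it below -/
import Mathlib

section
/- Let ρ_AB be a density matrix on ℂ^m ⊗ ℂ^n. If the set Λ_A(ρ_AB) admits a preparation-and-measurement noncontextual model, then ρ_AB is separable. -/
open Matrix
open scoped Kronecker ComplexOrder BigOperators

noncomputable section

/-- A density matrix: positive semidefinite with trace 1. -/
def IsDensity {d : Type*} [Fintype d] [DecidableEq d] (ρ : Matrix d d ℂ) : Prop :=
  ρ.PosSemidef ∧ ρ.trace = 1

/-- Partial trace over the second (B) factor. -/
def trB {m n : ℕ} (ρ : Matrix (Fin m × Fin n) (Fin m × Fin n) ℂ) :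
    Matrix (Fin m) (Fin m) ℂ := fun i j => ∑ k, ρ (i, k) (j, k)

/-- Partial trace over the first (A) factor. -/
def trA {m n : ℕ} (ρ : Matrix (Fin m × Fin n) (Fin m × Fin n) ℂ) :
    Matrix (Fin n) (Fin n) ℂ := fun k l => ∑ i, ρ (i, k) (i, l)

/-- The set of states remotely preparable on Alice's side. -/
def LambdaA {m n : ℕ} (ρ : Matrix (Fin m × Fin n) (Fin m × Fin n) ℂ) :
    Set (Matrix (Fin m) (Fin m) ℂ) :=
  {σ | IsDensity σ ∧ ∃ E : Matrix (Fin n) (Fin n) ℂ, E.PosSemidef ∧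
    σ = trB (((1 : Matrix (Fin m) (Fin m) ℂ) ⊗ₖ E) * ρ)}

/-- The set of states remotely preparable on Bob's side. -/
def LambdaB {m n : ℕ} (ρ : Matrix (Fin m × Fin n) (Fin m × Fin n) ℂ) :
    Set (Matrix (Fin n) (Fin n) ℂ) :=
  {σ | IsDensity σ ∧ ∃ E : Matrix (Fin m) (Fin m) ℂ, E.PosSemidef ∧
    σ = trA ((E ⊗ₖ (1 : Matrix (Fin n) (Fin n) ℂ)) * ρ)}

/-- A preparation-and-measurement noncontextual model for a set `K` of density matrices. -/
def HasNCModel {d : ℕ} (K : Set (Matrix (Fin d) (Fin d) ℂ)) : Prop :=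
  ∃ (L : ℕ) (N ω : Fin L → Matrix (Fin d) (Fin d) ℂ),
    (∀ l, (N l).IsHermitian) ∧ (∀ l, IsDensity (ω l)) ∧
    (∀ ρ ∈ K, ∀ l, 0 ≤ (ρ * N l).trace) ∧
    (∀ ρ ∈ K, ∑ l, (ρ * N l).trace = 1) ∧
    (∀ ρ ∈ K, ∀ M : Matrix (Fin d) (Fin d) ℂ, M.PosSemidef → (1 - M).PosSemidef →
      (ρ * M).trace = ∑ l, (ρ * N l).trace * (ω l * M).trace)

/-- Separability of a bipartite density matrix. -/
def Separable {m n : ℕ} (ρ : Matrix (Fin m × Fin n) (Fin m × Fin n) ℂ) : Prop :=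
  ∃ (L : ℕ) (ω : Fin L → Matrix (Fin m) (Fin m) ℂ)
    (κ : Fin L → Matrix (Fin n) (Fin n) ℂ),
    (∀ l, IsDensity (ω l)) ∧ (∀ l, (κ l).PosSemidef) ∧ ρ = ∑ l, ω l ⊗ₖ κ l

/-!
Steering turns `ρ` into the map sending an effect `E` of Bob to Alice's unnormalised conditional state
`condState ρ E = Tr_B[(I ⊗ E) ρ]`. Effects span all matrices, so a noncontextual model of `Λ_A(ρ)`
reads `σ = ∑ l, Tr(σ N l) • ω l`: the identity on the steered states factors through a classical
variable. By homogeneity this holds for every `condState ρ E` with `E ≥ 0`. Moving `N l` to Bob's side,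
`Tr(condState ρ E * N l) = Tr(κ l * E)` with `κ l = Tr_A[(N l ⊗ I) ρ]`, so `ρ` and `∑ l, ω l ⊗ κ l`
have the same expectations on product operators and are therefore equal. Each `κ l` is positive
because `Tr(κ l * E) ≥ 0` for all `E ≥ 0`.
-/

section TraceForm

open scoped MatrixOrder Matrix.Norms.L2Operator in
theorem span_effects_eq_top {d : Type*} [Finite d] [DecidableEq d] :
    Submodule.span ℂ {M : Matrix d d ℂ | M.PosSemidef ∧ (1 - M).PosSemidef} = ⊤ := by
  have := Fintype.ofFinite d
  rw [eq_top_iff, ← CStarAlgebra.span_nonneg_inter_unitClosedBall]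
  refine Submodule.span_mono fun M ⟨hM, hM1⟩ => ⟨nonneg_iff_posSemidef.1 hM, ?_⟩
  rw [← Matrix.le_iff]
  exact (CStarAlgebra.norm_le_one_iff_of_nonneg M hM).1 (mem_closedBall_zero_iff.1 hM1)

theorem span_posSemidef_eq_top {d : Type*} [Finite d] :
    Submodule.span ℂ {M : Matrix d d ℂ | M.PosSemidef} = ⊤ := by
  classical
  exact top_unique <| span_effects_eq_top.symm.trans_le <| Submodule.span_mono fun _ hM => hM.1

variable {d e : Type*} [Fintype d] [Fintype e]

theorem ext_of_trace_mul_effect [DecidableEq d] {A B : Matrix d d ℂ}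
    (h : ∀ M : Matrix d d ℂ, M.PosSemidef → (1 - M).PosSemidef →
      (A * M).trace = (B * M).trace) : A = B := by
  refine ext_iff_trace_mul_right.2 fun X => ?_
  have hAB : traceLinearMap d ℂ ℂ ∘ₗ LinearMap.mulLeft ℂ A =
      traceLinearMap d ℂ ℂ ∘ₗ LinearMap.mulLeft ℂ B :=
    LinearMap.ext_on span_effects_eq_top fun M hM => h M hM.1 hM.2
  exact LinearMap.congr_fun hAB X

theorem ext_of_trace_mul_kronecker {A B : Matrix (d × e) (d × e) ℂ}
    (h : ∀ (M : Matrix d d ℂ) (E : Matrix e e ℂ), M.PosSemidef → E.PosSemidef →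
      (A * (M ⊗ₖ E)).trace = (B * (M ⊗ₖ E)).trace) : A = B := by
  classical
  let φ (C : Matrix (d × e) (d × e) ℂ) : Matrix d d ℂ →ₗ[ℂ] Matrix e e ℂ →ₗ[ℂ] ℂ :=
    (kroneckerBilinear (R := ℂ)).compr₂ (traceLinearMap (d × e) ℂ ℂ ∘ₗ LinearMap.mulLeft ℂ C)
  have hφ : φ A = φ B :=
    LinearMap.ext_on span_posSemidef_eq_top fun M hM =>
      LinearMap.ext_on span_posSemidef_eq_top fun E hE => h M E hM hE
  ext ⟨i, k⟩ ⟨j, l⟩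
  have hjilk : (A * (single j i 1 ⊗ₖ single l k 1)).trace =
      (B * (single j i 1 ⊗ₖ single l k 1)).trace :=
    LinearMap.congr_fun₂ hφ (single j i 1) (single l k 1)
  simpa [single_kronecker_single, trace_mul_single] using hjilk

open scoped MatrixOrder in
theorem trace_mul_nonneg_of_posSemidef {A B : Matrix d d ℂ} (hA : A.PosSemidef)
    (hB : B.PosSemidef) : 0 ≤ (A * B).trace := by
  classical
  obtain ⟨C, rfl⟩ := CStarAlgebra.nonneg_iff_eq_star_mul_self.1 hB.nonneg
  rw [star_eq_conjTranspose, ← Matrix.mul_assoc, trace_mul_cycle]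
  exact (hA.mul_mul_conjTranspose_same C).trace_nonneg

theorem posSemidef_of_trace_mul_nonneg {A : Matrix d d ℂ}
    (h : ∀ M : Matrix d d ℂ, M.PosSemidef → 0 ≤ (A * M).trace) : A.PosSemidef := by
  classical
  rw [← isPositive_toEuclideanLin_iff, LinearMap.isPositive_iff_complex]
  intro x
  have hx := h _ (posSemidef_vecMulVec_self_star x.ofLp)
  rw [mul_vecMulVec, trace_vecMulVec] at hx
  have hinner : inner ℂ (toEuclideanLin A x) x = A *ᵥ x.ofLp ⬝ᵥ star x.ofLp := by
    rw [← inner_conj_symm, EuclideanSpace.inner_eq_star_dotProduct]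
    exact (IsSelfAdjoint.of_nonneg hx).star_eq
  rw [hinner]
  exact ⟨(Complex.eq_re_of_ofReal_le hx).symm, (Complex.nonneg_iff.1 hx).1⟩

/-- Block positivity: nonnegative expectation on every product of positive operators. Entanglement
witnesses are the block-positive matrices that are not positive semidefinite. -/
def IsBlockPositive (ρ : Matrix (d × e) (d × e) ℂ) : Prop :=
  ∀ (M : Matrix d d ℂ) (E : Matrix e e ℂ), M.PosSemidef → E.PosSemidef →
    0 ≤ (ρ * (M ⊗ₖ E)).trace

theorem isBlockPositive_of_posSemidef {ρ : Matrix (d × e) (d × e) ℂ} (hρ : ρ.PosSemidef) :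
    IsBlockPositive ρ :=
  fun _ _ hM hE => trace_mul_nonneg_of_posSemidef hρ (hM.kronecker hE)

end TraceForm

theorem HasNCModel.exists_eq_sum_trace_smul {d : ℕ} {K : Set (Matrix (Fin d) (Fin d) ℂ)}
    (h : HasNCModel K) :
    ∃ (L : ℕ) (N ω : Fin L → Matrix (Fin d) (Fin d) ℂ), (∀ l, IsDensity (ω l)) ∧
      (∀ σ ∈ K, ∀ l, 0 ≤ (σ * N l).trace) ∧ ∀ σ ∈ K, σ = ∑ l, (σ * N l).trace • ω l := by
  obtain ⟨L, N, ω, -, hω, hpos, -, hrep⟩ := h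
  refine ⟨L, N, ω, hω, hpos, fun σ hσ => ext_of_trace_mul_effect fun M hM hM1 => ?_⟩
  simpa [Matrix.sum_mul, trace_sum] using hrep σ hσ M hM hM1

section Steering

variable {m n : ℕ}

theorem trB_smul (c : ℂ) (R : Matrix (Fin m × Fin n) (Fin m × Fin n) ℂ) :
    trB (c • R) = c • trB R := by
  ext i j
  simp [trB, Finset.mul_sum]

theorem trace_trB_mul (R : Matrix (Fin m × Fin n) (Fin m × Fin n) ℂ)
    (M : Matrix (Fin m) (Fin m) ℂ) :
    (trB R * M).trace = (R * (M ⊗ₖ (1 : Matrix (Fin n) (Fin n) ℂ))).trace := by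
  simp only [trace, diag_apply, mul_apply, trB, kroneckerMap_apply, one_apply, mul_ite, mul_one,
    mul_zero, Fintype.sum_prod_type, Finset.sum_mul, Finset.sum_ite_eq', Finset.mem_univ, if_true]
  exact Finset.sum_congr rfl fun _ _ => Finset.sum_comm

theorem trace_trA_mul (R : Matrix (Fin m × Fin n) (Fin m × Fin n) ℂ)
    (E : Matrix (Fin n) (Fin n) ℂ) :
    (trA R * E).trace = (R * ((1 : Matrix (Fin m) (Fin m) ℂ) ⊗ₖ E)).trace := by
  simp only [trace, diag_apply, mul_apply, trA, kroneckerMap_apply, one_apply, ite_mul, one_mul,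
    zero_mul, mul_ite, mul_zero, Fintype.sum_prod_type, Finset.sum_mul, Finset.sum_ite_irrel,
    Finset.sum_const_zero, Finset.sum_ite_eq', Finset.mem_univ, if_true]
  exact Finset.sum_comm_cycle

/-- Alice's unnormalised state conditional on Bob obtaining the outcome of effect `E`. -/
def condState (ρ : Matrix (Fin m × Fin n) (Fin m × Fin n) ℂ) (E : Matrix (Fin n) (Fin n) ℂ) :
    Matrix (Fin m) (Fin m) ℂ :=
  trB (((1 : Matrix (Fin m) (Fin m) ℂ) ⊗ₖ E) * ρ)

/-- Alice's observable `N` transported to Bob's side by the adjoint of `condState ρ` for the trace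
pairing; the operators `K_λ` of the separable decomposition are of this form. -/
def dualEffect (ρ : Matrix (Fin m × Fin n) (Fin m × Fin n) ℂ) (N : Matrix (Fin m) (Fin m) ℂ) :
    Matrix (Fin n) (Fin n) ℂ :=
  trA ((N ⊗ₖ (1 : Matrix (Fin n) (Fin n) ℂ)) * ρ)

theorem condState_smul (ρ : Matrix (Fin m × Fin n) (Fin m × Fin n) ℂ) (c : ℂ)
    (E : Matrix (Fin n) (Fin n) ℂ) : condState ρ (c • E) = c • condState ρ E := by
  rw [condState, kronecker_smul, Matrix.smul_mul, trB_smul, condState]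

theorem trace_condState_mul (ρ : Matrix (Fin m × Fin n) (Fin m × Fin n) ℂ)
    (E : Matrix (Fin n) (Fin n) ℂ) (M : Matrix (Fin m) (Fin m) ℂ) :
    (condState ρ E * M).trace = (ρ * (M ⊗ₖ E)).trace := by
  rw [condState, trace_trB_mul, trace_mul_cycle, ← mul_kronecker_mul, Matrix.one_mul,
    Matrix.mul_one, trace_mul_comm]

theorem trace_dualEffect_mul (ρ : Matrix (Fin m × Fin n) (Fin m × Fin n) ℂ)
    (N : Matrix (Fin m) (Fin m) ℂ) (E : Matrix (Fin n) (Fin n) ℂ) :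
    (dualEffect ρ N * E).trace = (ρ * (N ⊗ₖ E)).trace := by
  rw [dualEffect, trace_trA_mul, trace_mul_cycle, ← mul_kronecker_mul, Matrix.one_mul,
    Matrix.mul_one, trace_mul_comm]

end Steering

section ConditionalStates

variable {m n : ℕ} {ρ : Matrix (Fin m × Fin n) (Fin m × Fin n) ℂ}

theorem IsBlockPositive.posSemidef_condState (hρ : IsBlockPositive ρ)
    {E : Matrix (Fin n) (Fin n) ℂ} (hE : E.PosSemidef) : (condState ρ E).PosSemidef :=
  posSemidef_of_trace_mul_nonneg fun M hM => by
    rw [trace_condState_mul]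
    exact hρ M E hM hE

theorem IsBlockPositive.condState_eq_zero_or_smul_mem_LambdaA (hρ : IsBlockPositive ρ)
    {E : Matrix (Fin n) (Fin n) ℂ} (hE : E.PosSemidef) :
    condState ρ E = 0 ∨ ∃ t : ℂ, 0 ≤ t ∧ ∃ σ ∈ LambdaA ρ, condState ρ E = t • σ := by
  have hS := hρ.posSemidef_condState hE
  refine or_iff_not_imp_left.2 fun hS0 => ?_
  set t := (condState ρ E).trace with ht
  have ht0 : t ≠ 0 := fun h => hS0 (hS.trace_eq_zero_iff.1 h)
  have htinv : 0 ≤ t⁻¹ := inv_nonneg.2 hS.trace_nonneg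
  refine ⟨t, hS.trace_nonneg, t⁻¹ • condState ρ E, ⟨⟨hS.smul htinv, ?_⟩,
    t⁻¹ • E, hE.smul htinv, ?_⟩, (smul_inv_smul₀ ht0 _).symm⟩
  · rw [trace_smul, ← ht, smul_eq_mul, inv_mul_cancel₀ ht0]
  · exact (condState_smul ρ t⁻¹ E).symm

theorem IsBlockPositive.posSemidef_dualEffect (hρ : IsBlockPositive ρ)
    {N : Matrix (Fin m) (Fin m) ℂ} (hN : ∀ σ ∈ LambdaA ρ, 0 ≤ (σ * N).trace) :
    (dualEffect ρ N).PosSemidef := by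
  refine posSemidef_of_trace_mul_nonneg fun E hE => ?_
  rw [trace_dualEffect_mul, ← trace_condState_mul]
  obtain hS0 | ⟨t, ht, σ, hσ, hS⟩ := hρ.condState_eq_zero_or_smul_mem_LambdaA hE
  · simp [hS0]
  · rw [hS, Matrix.smul_mul, trace_smul]
    exact smul_nonneg ht (hN σ hσ)

theorem IsBlockPositive.condState_eq_sum_trace_smul (hρ : IsBlockPositive ρ)
    {ι : Type*} [Fintype ι] {N ω : ι → Matrix (Fin m) (Fin m) ℂ}
    (hNω : ∀ σ ∈ LambdaA ρ, σ = ∑ l, (σ * N l).trace • ω l)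
    {E : Matrix (Fin n) (Fin n) ℂ} (hE : E.PosSemidef) :
    condState ρ E = ∑ l, (condState ρ E * N l).trace • ω l := by
  obtain hS0 | ⟨t, -, σ, hσ, hS⟩ := hρ.condState_eq_zero_or_smul_mem_LambdaA hE
  · simp [hS0]
  · simp only [hS, Matrix.smul_mul, trace_smul, smul_assoc, ← Finset.smul_sum, ← hNω σ hσ]

theorem eq_sum_kronecker_dualEffect {ι : Type*} [Fintype ι]
    {N ω : ι → Matrix (Fin m) (Fin m) ℂ}
    (h : ∀ E : Matrix (Fin n) (Fin n) ℂ, E.PosSemidef →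
      condState ρ E = ∑ l, (condState ρ E * N l).trace • ω l) :
    ρ = ∑ l, ω l ⊗ₖ dualEffect ρ (N l) := by
  refine ext_of_trace_mul_kronecker fun M E _ hE => ?_
  calc (ρ * (M ⊗ₖ E)).trace
      = ((∑ l, (condState ρ E * N l).trace • ω l) * M).trace := by
        rw [← h E hE, trace_condState_mul]
    _ = ∑ l, (ω l * M).trace * (dualEffect ρ (N l) * E).trace := by
        simp only [Matrix.sum_mul, trace_sum, Matrix.smul_mul, trace_smul, smul_eq_mul,
          trace_condState_mul, trace_dualEffect_mul, mul_comm]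
    _ = ((∑ l, ω l ⊗ₖ dualEffect ρ (N l)) * (M ⊗ₖ E)).trace := by
        simp only [Matrix.sum_mul, trace_sum, ← mul_kronecker_mul, trace_kronecker]

theorem contextuality_precondition_for_entanglement_general (hρ : IsBlockPositive ρ)
    (h : HasNCModel (LambdaA ρ)) : Separable ρ := by
  obtain ⟨L, N, ω, hω, hpos, hrep⟩ := h.exists_eq_sum_trace_smul
  exact ⟨L, ω, fun l => dualEffect ρ (N l), hω,
    fun l => hρ.posSemidef_dualEffect fun σ hσ => hpos σ hσ l,
    eq_sum_kronecker_dualEffect fun _ hE => hρ.condState_eq_sum_trace_smul hrep hE⟩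

end ConditionalStates

theorem contextuality_precondition_for_entanglement {m n : ℕ}
    (ρ : Matrix (Fin m × Fin n) (Fin m × Fin n) ℂ) (hρ : IsDensity ρ)
    (h : HasNCModel (LambdaA ρ)) : Separable ρ :=
  contextuality_precondition_for_entanglement_general (isBlockPositive_of_posSemidef hρ.1) h
end
end

section
/- Let ρ_AB be a density matrix on ℂ^m ⊗ ℂ^n and let N be a Hermitian m×m matrix such that Tr(σ N) ≥ 0 for every σ ∈ Λ_A(ρ_AB). Then the matrix Tr_A[(N ⊗ I_B) ρ_AB] is positive semidefinite. -/
open Matrix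
open scoped Kronecker ComplexOrder BigOperators

noncomputable section

/-!
The maps `E ↦ Tr_B[(I ⊗ E) ρ]` and `N ↦ Tr_A[(N ⊗ I) ρ]` are dual under the trace pairing:
`Tr(Tr_B[(I ⊗ E) ρ] N) = Tr(E Tr_A[(N ⊗ I) ρ])`. For `E ≥ 0` the matrix `Tr_B[(I ⊗ E) ρ]` is
positive semidefinite, so it is either zero or a positive multiple of an element of `Λ_A(ρ)`, and
the pairing is nonnegative. Since the positive semidefinite cone is self-dual, `Tr_A[(N ⊗ I) ρ]`
lies in it.
-/

section PosSemidef

variable {d : Type*} [Fintype d]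

theorem trace_vecMulVec_mul {R : Type*} [CommSemiring R] (v w : d → R) (M : Matrix d d R) :
    (vecMulVec v w * M).trace = w ⬝ᵥ (M *ᵥ v) := by
  rw [trace_mul_comm, mul_vecMulVec, trace_vecMulVec, dotProduct_comm]

-- By polarization over `ℂ`, a matrix with real-valued quadratic form is Hermitian.
theorem posSemidef_of_forall_dotProduct_mulVec_nonneg {M : Matrix d d ℂ}
    (hM : ∀ v : d → ℂ, 0 ≤ star v ⬝ᵥ (M *ᵥ v)) : M.PosSemidef := by
  classical
  rw [← isPositive_toEuclideanLin_iff, LinearMap.isPositive_iff_complex]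
  intro v
  have hinner : 0 ≤ inner ℂ v (M.toEuclideanLin v) := by
    simpa only [EuclideanSpace.inner_eq_star_dotProduct, ofLp_toLpLin, toLin'_apply,
      dotProduct_comm (M *ᵥ _)] using hM v.ofLp
  have hinner_symm : 0 ≤ inner ℂ (M.toEuclideanLin v) v := by
    rwa [← inner_conj_symm, starRingEnd_apply, star_nonneg_iff]
  exact ⟨(Complex.eq_re_of_ofReal_le hinner_symm).symm, (Complex.nonneg_iff.1 hinner_symm).1⟩

theorem posSemidef_of_forall_trace_mul_nonneg {M : Matrix d d ℂ}
    (hM : ∀ E : Matrix d d ℂ, E.PosSemidef → 0 ≤ (E * M).trace) : M.PosSemidef :=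
  posSemidef_of_forall_dotProduct_mulVec_nonneg fun v =>
    trace_vecMulVec_mul v (star v) M ▸ hM _ (posSemidef_vecMulVec_self_star v)

theorem isDensity_inv_trace_smul [DecidableEq d] {σ : Matrix d d ℂ} (hσ : σ.PosSemidef)
    (htr : σ.trace ≠ 0) : IsDensity (σ.trace⁻¹ • σ) :=
  ⟨hσ.smul (inv_nonneg.2 hσ.trace_nonneg), by
    rw [trace_smul, smul_eq_mul, inv_mul_cancel₀ htr]⟩

end PosSemidef

section PartialTrace

variable {m n : ℕ} (X : Matrix (Fin m × Fin n) (Fin m × Fin n) ℂ)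

theorem trace_trB : (trB X).trace = X.trace := by
  simp only [trB, trace, diag_apply, Fintype.sum_prod_type]

theorem trace_trA : (trA X).trace = X.trace := by
  simp only [trA, trace, diag_apply, Fintype.sum_prod_type_right]

theorem trB_smul_s1 (c : ℂ) : trB (c • X) = c • trB X := by
  ext i j
  simp only [trB, Matrix.smul_apply, Finset.smul_sum]

theorem trB_mul_kronecker_one (N : Matrix (Fin m) (Fin m) ℂ) :
    trB (X * (N ⊗ₖ (1 : Matrix (Fin n) (Fin n) ℂ))) = trB X * N := by
  ext i j
  simp only [trB, mul_apply, kroneckerMap_apply, one_apply, mul_ite, mul_one, mul_zero,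
    Fintype.sum_prod_type, Finset.sum_ite_eq', Finset.mem_univ, ↓reduceIte, Finset.sum_mul]
  exact Finset.sum_comm

theorem trA_one_kronecker_mul (E : Matrix (Fin n) (Fin n) ℂ) :
    trA (((1 : Matrix (Fin m) (Fin m) ℂ) ⊗ₖ E) * X) = E * trA X := by
  ext k l
  simp only [trA, mul_apply, kroneckerMap_apply, one_apply, ite_mul, one_mul, zero_mul,
    Fintype.sum_prod_type_right, Finset.sum_ite_eq, Finset.mem_univ, ↓reduceIte, Finset.mul_sum]
  exact Finset.sum_comm

theorem trB_one_kronecker_mul_comm (E : Matrix (Fin n) (Fin n) ℂ) :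
    trB (((1 : Matrix (Fin m) (Fin m) ℂ) ⊗ₖ E) * X) =
      trB (X * ((1 : Matrix (Fin m) (Fin m) ℂ) ⊗ₖ E)) := by
  ext i j
  simp only [trB, mul_apply, kroneckerMap_apply, one_apply, ite_mul, one_mul, zero_mul,
    mul_comm (E _ _), Fintype.sum_prod_type_right, Finset.sum_ite_eq, Finset.mem_univ, ↓reduceIte,
    mul_ite, mul_zero, Finset.sum_ite_eq']
  exact Finset.sum_comm

theorem trace_trB_one_kronecker_mul_mul (E : Matrix (Fin n) (Fin n) ℂ)
    (N : Matrix (Fin m) (Fin m) ℂ) :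
    (trB (((1 : Matrix (Fin m) (Fin m) ℂ) ⊗ₖ E) * X) * N).trace =
      (E * trA ((N ⊗ₖ (1 : Matrix (Fin n) (Fin n) ℂ)) * X)).trace := by
  have hcomm : (N ⊗ₖ (1 : Matrix (Fin n) (Fin n) ℂ)) * ((1 : Matrix (Fin m) (Fin m) ℂ) ⊗ₖ E) =
      ((1 : Matrix (Fin m) (Fin m) ℂ) ⊗ₖ E) * (N ⊗ₖ (1 : Matrix (Fin n) (Fin n) ℂ)) := by
    simp only [← mul_kronecker_mul, Matrix.mul_one, Matrix.one_mul]
  rw [← trB_mul_kronecker_one, trace_trB, trace_mul_comm, ← Matrix.mul_assoc, hcomm,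
    Matrix.mul_assoc, ← trace_trA, trA_one_kronecker_mul]

variable {X}

theorem posSemidef_trB (hX : X.PosSemidef) : (trB X).PosSemidef := by
  have hsum : trB X = ∑ k, X.submatrix (fun i => (i, k)) (fun i => (i, k)) := by
    ext i j
    simp only [trB, Matrix.sum_apply, submatrix_apply]
  rw [hsum]
  exact posSemidef_sum _ fun k _ => hX.submatrix _

open scoped MatrixOrder in
theorem posSemidef_trB_one_kronecker_mul (hX : X.PosSemidef) {E : Matrix (Fin n) (Fin n) ℂ}
    (hE : E.PosSemidef) :
    (trB (((1 : Matrix (Fin m) (Fin m) ℂ) ⊗ₖ E) * X)).PosSemidef := by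
  obtain ⟨B, rfl⟩ := CStarAlgebra.nonneg_iff_eq_star_mul_self.mp hE.nonneg
  set C := (1 : Matrix (Fin m) (Fin m) ℂ) ⊗ₖ B
  have hfactor : (1 : Matrix (Fin m) (Fin m) ℂ) ⊗ₖ (star B * B) =
      ((1 : Matrix (Fin m) (Fin m) ℂ) ⊗ₖ star B) * C := by
    rw [← mul_kronecker_mul, Matrix.one_mul]
  have hstar : (1 : Matrix (Fin m) (Fin m) ℂ) ⊗ₖ star B = Cᴴ := by
    rw [conjTranspose_kronecker, conjTranspose_one, star_eq_conjTranspose]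
  rw [hfactor, Matrix.mul_assoc, trB_one_kronecker_mul_comm, hstar]
  exact posSemidef_trB (hX.mul_mul_conjTranspose_same C)

end PartialTrace

section RemotePreparation

variable {m n : ℕ} {ρ : Matrix (Fin m × Fin n) (Fin m × Fin n) ℂ}

theorem inv_trace_smul_trB_mem_LambdaA (hρ : ρ.PosSemidef) {E : Matrix (Fin n) (Fin n) ℂ}
    (hE : E.PosSemidef) (htr : (trB (((1 : Matrix (Fin m) (Fin m) ℂ) ⊗ₖ E) * ρ)).trace ≠ 0) :
    (trB (((1 : Matrix (Fin m) (Fin m) ℂ) ⊗ₖ E) * ρ)).trace⁻¹ •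
      trB (((1 : Matrix (Fin m) (Fin m) ℂ) ⊗ₖ E) * ρ) ∈ LambdaA ρ := by
  have hσ := posSemidef_trB_one_kronecker_mul hρ hE
  refine ⟨isDensity_inv_trace_smul hσ htr, _, hE.smul (inv_nonneg.2 hσ.trace_nonneg), ?_⟩
  rw [kronecker_smul, Matrix.smul_mul, trB_smul_s1]

theorem trace_trB_mul_nonneg_of_nonneg_on_LambdaA (hρ : ρ.PosSemidef)
    {N : Matrix (Fin m) (Fin m) ℂ} (hpos : ∀ σ ∈ LambdaA ρ, 0 ≤ (σ * N).trace)
    {E : Matrix (Fin n) (Fin n) ℂ} (hE : E.PosSemidef) :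
    0 ≤ (trB (((1 : Matrix (Fin m) (Fin m) ℂ) ⊗ₖ E) * ρ) * N).trace := by
  have hmem := inv_trace_smul_trB_mem_LambdaA hρ hE
  have hσ := posSemidef_trB_one_kronecker_mul hρ hE
  generalize trB (((1 : Matrix (Fin m) (Fin m) ℂ) ⊗ₖ E) * ρ) = σ at hmem hσ ⊢
  by_cases htr : σ.trace = 0
  · rw [hσ.trace_eq_zero_iff.1 htr, Matrix.zero_mul, trace_zero]
  · calc 0 ≤ σ.trace * ((σ.trace⁻¹ • σ) * N).trace :=
          mul_nonneg hσ.trace_nonneg (hpos _ (hmem htr))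
      _ = (σ * N).trace := by
          rw [Matrix.smul_mul, trace_smul, smul_eq_mul, mul_inv_cancel_left₀ htr]

end RemotePreparation

theorem partialTrace_posSemidef_of_nonneg_on_LambdaA_general {m n : ℕ}
    {ρ : Matrix (Fin m × Fin n) (Fin m × Fin n) ℂ} (hρ : ρ.PosSemidef)
    {N : Matrix (Fin m) (Fin m) ℂ} (hpos : ∀ σ ∈ LambdaA ρ, 0 ≤ (σ * N).trace) :
    (trA ((N ⊗ₖ (1 : Matrix (Fin n) (Fin n) ℂ)) * ρ)).PosSemidef := by
  refine posSemidef_of_forall_trace_mul_nonneg fun E hE => ?_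
  rw [← trace_trB_one_kronecker_mul_mul]
  exact trace_trB_mul_nonneg_of_nonneg_on_LambdaA hρ hpos hE

theorem partialTrace_posSemidef_of_nonneg_on_LambdaA {m n : ℕ}
    (ρ : Matrix (Fin m × Fin n) (Fin m × Fin n) ℂ) (hρ : IsDensity ρ)
    (N : Matrix (Fin m) (Fin m) ℂ) (hN : N.IsHermitian)
    (hpos : ∀ σ ∈ LambdaA ρ, 0 ≤ (σ * N).trace) :
    (trA ((N ⊗ₖ (1 : Matrix (Fin n) (Fin n) ℂ)) * ρ)).PosSemidef := by
  exact partialTrace_posSemidef_of_nonneg_on_LambdaA_general hρ.1 hpos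
end
end

section
/- Let ρ_AB be a separable density matrix on ℂ^m ⊗ ℂ^n, let A₁, A₂ be Hermitian m×m matrices with −I_A ≤ A_i ≤ I_A, and let B₁, B₂ be Hermitian n×n matrices with −I_B ≤ B_i ≤ I_B. Then Tr[(A₁ ⊗ (B₁ + B₂) + A₂ ⊗ (B₁ − B₂)) ρ_AB] ≤ 2. -/
open Matrix
open scoped Kronecker ComplexOrder BigOperators

noncomputable section

/-!
On a product `ω ⊗ κ` of positive semidefinite matrices the trace of the CHSH witness factors into
the correlation polynomial `a₁ (b₁ + b₂) + a₂ (b₁ - b₂)`, where the local expectations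
`aᵢ = Tr (Aᵢ ω)` and `bᵢ = Tr (Bᵢ κ)` are bounded in modulus by `Tr ω` and `Tr κ`. That polynomial
is affine in each variable, so it is at most the maximum of its values at the extreme assignments
`aᵢ = ±Tr ω`, `bᵢ = ±Tr κ`, all equal to `±2 Tr ω Tr κ`, and the bound passes to sums of products
by linearity.
-/

theorem chsh_polynomial_le {R : Type*} [CommRing R] [PartialOrder R] [IsStrictOrderedRing R]
    [PosMulReflectLE R] {s t a₁ a₂ b₁ b₂ : R}
    (ha₁ : a₁ ∈ Set.Icc (-s) s) (ha₂ : a₂ ∈ Set.Icc (-s) s)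
    (hb₁ : b₁ ∈ Set.Icc (-t) t) (hb₂ : b₂ ∈ Set.Icc (-t) t) :
    a₁ * (b₁ + b₂) + a₂ * (b₁ - b₂) ≤ 2 * (s * t) := by
  have hs : 0 ≤ s := by
    have h2s : 0 ≤ 2 * s := by
      rw [two_mul, ← neg_le_iff_add_nonneg]
      exact ha₁.1.trans ha₁.2
    exact le_of_mul_le_mul_left (by rwa [mul_zero]) (two_pos : (0 : R) < 2)
  obtain rfl | hs := hs.eq_or_lt
  · have h₁ : a₁ = 0 := by simpa using ha₁
    have h₂ : a₂ = 0 := by simpa using ha₂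
    simp [h₁, h₂]
  have slack {c x : R} (hx : x ∈ Set.Icc (-c) c) : 0 ≤ c + x ∧ 0 ≤ c - x :=
    ⟨neg_le_iff_add_nonneg'.mp hx.1, sub_nonneg.mpr hx.2⟩
  obtain ⟨ha₁l, ha₁u⟩ := slack ha₁
  obtain ⟨ha₂l, ha₂u⟩ := slack ha₂
  obtain ⟨hb₁l, hb₁u⟩ := slack hb₁
  obtain ⟨hb₂l, hb₂u⟩ := slack hb₂
  refine le_of_mul_le_mul_left (sub_nonneg.mp ?_) (mul_pos two_pos hs)
  -- Interpolation in `(a₁, a₂)` from the corners `(±s, ±s)`, after clearing denominators.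
  calc
    0 ≤ (s + a₁) * (s + a₂) * (t - b₁) + (s + a₁) * (s - a₂) * (t - b₂)
        + (s - a₁) * (s + a₂) * (t + b₂) + (s - a₁) * (s - a₂) * (t + b₁) := by positivity
    _ = 2 * s * (2 * (s * t)) - 2 * s * (a₁ * (b₁ + b₂) + a₂ * (b₁ - b₂)) := by ring

section

variable {𝕜 m n : Type*} [RCLike 𝕜] [Fintype m] [Fintype n]

open scoped MatrixOrder in
theorem trace_mul_nonneg_of_posSemidef_s12 {P Q : Matrix n n 𝕜}
    (hP : P.PosSemidef) (hQ : Q.PosSemidef) : 0 ≤ (P * Q).trace := by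
  classical
  obtain ⟨C, rfl⟩ := CStarAlgebra.nonneg_iff_eq_star_mul_self.mp hP.nonneg
  rw [mul_assoc, trace_mul_comm]
  exact (hQ.mul_mul_conjTranspose_same C).trace_nonneg

theorem trace_mul_le_trace_mul_of_posSemidef_sub {P X Y : Matrix n n 𝕜}
    (hP : P.PosSemidef) (hXY : (Y - X).PosSemidef) : (X * P).trace ≤ (Y * P).trace := by
  rw [← sub_nonneg, ← trace_sub, ← Matrix.sub_mul]
  exact trace_mul_nonneg_of_posSemidef_s12 hXY hP

theorem trace_mul_mem_Icc [DecidableEq n] {P X : Matrix n n 𝕜} (hP : P.PosSemidef)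
    (hXu : (1 - X).PosSemidef) (hXl : (X + 1).PosSemidef) :
    (X * P).trace ∈ Set.Icc (-P.trace) P.trace := by
  constructor
  · rw [← sub_neg_eq_add] at hXl
    simpa using trace_mul_le_trace_mul_of_posSemidef_sub hP hXl
  · simpa using trace_mul_le_trace_mul_of_posSemidef_sub hP hXu

/-- The CHSH operator of the local observables `A₁`, `A₂` and `B₁`, `B₂`, without normalization, so
that its bound on separable states is `2`. -/
def chshOperator (A₁ A₂ : Matrix m m 𝕜) (B₁ B₂ : Matrix n n 𝕜) : Matrix (m × n) (m × n) 𝕜 :=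
  A₁ ⊗ₖ (B₁ + B₂) + A₂ ⊗ₖ (B₁ - B₂)

theorem trace_chshOperator_mul_kronecker (A₁ A₂ ω : Matrix m m 𝕜) (B₁ B₂ κ : Matrix n n 𝕜) :
    (chshOperator A₁ A₂ B₁ B₂ * ω ⊗ₖ κ).trace =
      (A₁ * ω).trace * ((B₁ * κ).trace + (B₂ * κ).trace) +
        (A₂ * ω).trace * ((B₁ * κ).trace - (B₂ * κ).trace) := by
  simp only [chshOperator, Matrix.add_mul, Matrix.sub_mul, ← mul_kronecker_mul, trace_add,
    trace_sub, trace_kronecker]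

variable [DecidableEq m] [DecidableEq n] {A₁ A₂ : Matrix m m 𝕜} {B₁ B₂ : Matrix n n 𝕜}

theorem trace_chshOperator_mul_kronecker_le {ω : Matrix m m 𝕜} {κ : Matrix n n 𝕜}
    (hω : ω.PosSemidef) (hκ : κ.PosSemidef)
    (hA₁u : (1 - A₁).PosSemidef) (hA₁l : (A₁ + 1).PosSemidef)
    (hA₂u : (1 - A₂).PosSemidef) (hA₂l : (A₂ + 1).PosSemidef)
    (hB₁u : (1 - B₁).PosSemidef) (hB₁l : (B₁ + 1).PosSemidef)
    (hB₂u : (1 - B₂).PosSemidef) (hB₂l : (B₂ + 1).PosSemidef) :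
    (chshOperator A₁ A₂ B₁ B₂ * ω ⊗ₖ κ).trace ≤ 2 * (ω ⊗ₖ κ).trace := by
  rw [trace_chshOperator_mul_kronecker, trace_kronecker]
  exact chsh_polynomial_le (trace_mul_mem_Icc hω hA₁u hA₁l) (trace_mul_mem_Icc hω hA₂u hA₂l)
    (trace_mul_mem_Icc hκ hB₁u hB₁l) (trace_mul_mem_Icc hκ hB₂u hB₂l)

theorem chsh_witness_separable_bound_general {ι : Type*} (S : Finset ι)
    {ω : ι → Matrix m m 𝕜} {κ : ι → Matrix n n 𝕜}
    (hω : ∀ l ∈ S, (ω l).PosSemidef) (hκ : ∀ l ∈ S, (κ l).PosSemidef)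
    (hA₁u : (1 - A₁).PosSemidef) (hA₁l : (A₁ + 1).PosSemidef)
    (hA₂u : (1 - A₂).PosSemidef) (hA₂l : (A₂ + 1).PosSemidef)
    (hB₁u : (1 - B₁).PosSemidef) (hB₁l : (B₁ + 1).PosSemidef)
    (hB₂u : (1 - B₂).PosSemidef) (hB₂l : (B₂ + 1).PosSemidef) :
    (chshOperator A₁ A₂ B₁ B₂ * ∑ l ∈ S, ω l ⊗ₖ κ l).trace ≤
      2 * (∑ l ∈ S, ω l ⊗ₖ κ l).trace := by
  rw [Matrix.mul_sum, trace_sum, trace_sum, Finset.mul_sum]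
  exact Finset.sum_le_sum fun l hl ↦ trace_chshOperator_mul_kronecker_le (hω l hl) (hκ l hl)
    hA₁u hA₁l hA₂u hA₂l hB₁u hB₁l hB₂u hB₂l

end

theorem chsh_witness_separable_bound {m n : ℕ}
    (ρ : Matrix (Fin m × Fin n) (Fin m × Fin n) ℂ)
    (hρ : IsDensity ρ) (hsep : Separable ρ)
    (A₁ A₂ : Matrix (Fin m) (Fin m) ℂ) (B₁ B₂ : Matrix (Fin n) (Fin n) ℂ)
    (hA₁ : A₁.IsHermitian) (hA₂ : A₂.IsHermitian)
    (hB₁ : B₁.IsHermitian) (hB₂ : B₂.IsHermitian)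
    (hA₁u : (1 - A₁).PosSemidef) (hA₁l : (A₁ + 1).PosSemidef)
    (hA₂u : (1 - A₂).PosSemidef) (hA₂l : (A₂ + 1).PosSemidef)
    (hB₁u : (1 - B₁).PosSemidef) (hB₁l : (B₁ + 1).PosSemidef)
    (hB₂u : (1 - B₂).PosSemidef) (hB₂l : (B₂ + 1).PosSemidef) :
    ((A₁ ⊗ₖ (B₁ + B₂) + A₂ ⊗ₖ (B₁ - B₂)) * ρ).trace ≤ 2 := by
  obtain ⟨L, ω, κ, hω, hκ, rfl⟩ := hsep
  exact (chsh_witness_separable_bound_general Finset.univ (fun l _ ↦ (hω l).1) (fun l _ ↦ hκ l)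
    hA₁u hA₁l hA₂u hA₂l hB₁u hB₁l hB₂u hB₂l).trans_eq (by rw [hρ.2, mul_one])
end
end

section
/- Let n ≥ 2, let {X_i}_{i=1}^{n²−1} and {Y_i}_{i=1}^{n²−1} be bases of the real vector space of traceless Hermitian n×n matrices that are orthonormal with respect to the Hilbert–Schmidt inner product ⟨A,B⟩ = Tr(A†B), let μ be a nonzero real number, and set τ = (1/n) I ⊗ I + μ ∑_{i=1}^{n²−1} X_i ⊗ Y_i, a matrix on ℂ^n ⊗ ℂ^n. Then the linear map Ψ_{B→A}^τ : E ↦ Tr_B[(I_A ⊗ E) τ], from n×n complex matrices to n×n complex matrices, is bijective. -/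
open Matrix
open scoped Kronecker ComplexOrder BigOperators

noncomputable section

/-!
If `τ = ∑ a, w a • A a ⊗ B a`, then `Tr_B[(I ⊗ E) τ] = ∑ a, (w a * Tr (E * B a)) • A a`. When the
`A a` are linearly independent and all `w a` are nonzero, the kernel therefore consists of those
`E` with `Tr (E * B a) = 0` for all `a`; if the `B a` span, nondegeneracy of the trace pairing
forces `E = 0`. A family of `n² - 1` matrices whose real span contains the traceless Hermitian
matrices becomes a complex basis of all `n × n` matrices once the identity is adjoined: it spans,
and it has the right cardinality.
-/

theorem eq_zero_of_trace_mul_eq_zero_of_span_eq_top {d e κ R : Type*} [Fintype d] [Fintype e]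
    [CommSemiring R] {B : κ → Matrix e d R} (hB : Submodule.span R (Set.range B) = ⊤)
    {E : Matrix d e R} (hE : ∀ a, (E * B a).trace = 0) : E = 0 := by
  have hzero : Matrix.traceLinearMap d R R ∘ₗ mulLeftLinearMap d R E = 0 :=
    LinearMap.ext_on_range hB hE
  refine Matrix.ext_iff_trace_mul_right.mpr fun M => ?_
  rw [Matrix.zero_mul, Matrix.trace_zero]
  exact LinearMap.congr_fun hzero M

section Steering

variable {m n : ℕ}

/-- The partial trace over the second factor, bundled as a linear map so that it commutes with
sums and scalars by the general linear map lemmas. -/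
def trBLinearMap :
    Matrix (Fin m × Fin n) (Fin m × Fin n) ℂ →ₗ[ℂ] Matrix (Fin m) (Fin m) ℂ where
  toFun := trB
  map_add' ρ σ := by
    ext i j
    simp only [trB, Matrix.add_apply, Finset.sum_add_distrib]
  map_smul' c ρ := by
    ext i j
    simp only [trB, Matrix.smul_apply, Finset.smul_sum, RingHom.id_apply]

theorem trBLinearMap_kronecker (A : Matrix (Fin m) (Fin m) ℂ) (B : Matrix (Fin n) (Fin n) ℂ) :
    trBLinearMap (A ⊗ₖ B) = B.trace • A := by
  ext i j
  change ∑ k, A i j * B k k = (∑ k, B k k) * A i j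
  rw [← Finset.mul_sum, mul_comm]

/-- The map `Ψ_{B→A}^τ : E ↦ Tr_B[(I ⊗ E) τ]`, sending an effect on Bob's side to the unnormalized
state it steers Alice to. -/
def steeringMap (τ : Matrix (Fin m × Fin n) (Fin m × Fin n) ℂ) :
    Matrix (Fin n) (Fin n) ℂ →ₗ[ℂ] Matrix (Fin m) (Fin m) ℂ :=
  trBLinearMap ∘ₗ LinearMap.mulRight ℂ τ ∘ₗ kroneckerBilinear (R := ℂ) 1

variable {ι : Type*} [Fintype ι]

theorem steeringMap_sum_smul_kronecker (w : ι → ℂ) (A : ι → Matrix (Fin m) (Fin m) ℂ)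
    (B : ι → Matrix (Fin n) (Fin n) ℂ) (E : Matrix (Fin n) (Fin n) ℂ) :
    steeringMap (∑ a, w a • A a ⊗ₖ B a) E = ∑ a, (w a * (E * B a).trace) • A a := by
  change trBLinearMap ((1 ⊗ₖ E) * ∑ a, w a • A a ⊗ₖ B a) = _
  simp only [Finset.mul_sum, Matrix.mul_smul, ← Matrix.mul_kronecker_mul, one_mul, map_sum,
    map_smul, trBLinearMap_kronecker, smul_smul]

theorem steeringMap_injective {w : ι → ℂ} {A : ι → Matrix (Fin m) (Fin m) ℂ}
    {B : ι → Matrix (Fin n) (Fin n) ℂ} (hA : LinearIndependent ℂ A)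
    (hB : Submodule.span ℂ (Set.range B) = ⊤) (hw : ∀ a, w a ≠ 0) :
    Function.Injective (steeringMap (∑ a, w a • A a ⊗ₖ B a)) := by
  refine (injective_iff_map_eq_zero _).mpr fun E hE => ?_
  rw [steeringMap_sum_smul_kronecker] at hE
  have hcoeff := Fintype.linearIndependent_iff.mp hA _ hE
  exact eq_zero_of_trace_mul_eq_zero_of_span_eq_top hB fun a =>
    (mul_eq_zero.mp (hcoeff a)).resolve_left (hw a)

end Steering

section TracelessHermitian

variable {d : Type*} [Fintype d] [DecidableEq d]

theorem eq_top_of_traceless_isHermitian_mem {S : Submodule ℂ (Matrix d d ℂ)} (hone : 1 ∈ S)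
    (htraceless : ∀ H : Matrix d d ℂ, H.IsHermitian → H.trace = 0 → H ∈ S) : S = ⊤ := by
  rw [eq_top_iff, ← span_selfAdjoint, Submodule.span_le]
  intro H hH
  have hHerm : H.IsHermitian := hH
  let t : ℂ := H.trace / Fintype.card d
  have ht : IsSelfAdjoint t := by
    have htrace : IsSelfAdjoint H.trace := by
      rw [isSelfAdjoint_iff, ← Matrix.trace_conjTranspose, hHerm.eq]
    exact htrace.div (.natCast _)
  have hmem : H - t • 1 ∈ S := by
    refine htraceless _ (hHerm.sub (Matrix.isHermitian_one.smul ht)) ?_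
    cases isEmpty_or_nonempty d <;>
      simp [t, Matrix.trace_sub, Matrix.trace_smul, Matrix.trace_one]
  exact (S.sub_mem_iff_left (S.smul_mem t hone)).mp hmem

/-- The family `X` with the identity matrix adjoined, at the index `none`. -/
def adjoinOne {ι : Type*} (X : ι → Matrix d d ℂ) : Option ι → Matrix d d ℂ :=
  fun a => a.elim 1 X

variable {ι : Type*} {X : ι → Matrix d d ℂ}

theorem span_adjoinOne_eq_top
    (hX : ∀ H : Matrix d d ℂ, H.IsHermitian → H.trace = 0 →
      H ∈ Submodule.span ℝ (Set.range X)) :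
    Submodule.span ℂ (Set.range (adjoinOne X)) = ⊤ := by
  have hrange : Set.range X ⊆ Set.range (adjoinOne X) :=
    Set.range_subset_iff.mpr fun i => ⟨some i, rfl⟩
  refine eq_top_of_traceless_isHermitian_mem
    (Submodule.subset_span ⟨none, rfl⟩) fun H hH htr => ?_
  exact Submodule.span_mono hrange (Submodule.span_subset_span ℝ ℂ _ (hX H hH htr))

theorem linearIndependent_adjoinOne [Fintype ι]
    (hcard : Fintype.card ι + 1 = Fintype.card d ^ 2)
    (hX : ∀ H : Matrix d d ℂ, H.IsHermitian → H.trace = 0 →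
      H ∈ Submodule.span ℝ (Set.range X)) :
    LinearIndependent ℂ (adjoinOne X) := by
  refine linearIndependent_of_top_le_span_of_card_eq_finrank (span_adjoinOne_eq_top hX).ge ?_
  rw [Fintype.card_option, hcard, Module.finrank_matrix, Module.finrank_self, mul_one, sq]

end TracelessHermitian

theorem robustifying_state_invertible_general {n : ℕ} {ι : Type*} [Fintype ι]
    (hcard : Fintype.card ι + 1 = n ^ 2) (X Y : ι → Matrix (Fin n) (Fin n) ℂ)
    (hXspan : ∀ H : Matrix (Fin n) (Fin n) ℂ, H.IsHermitian → H.trace = 0 →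
      H ∈ Submodule.span ℝ (Set.range X))
    (hYspan : ∀ H : Matrix (Fin n) (Fin n) ℂ, H.IsHermitian → H.trace = 0 →
      H ∈ Submodule.span ℝ (Set.range Y))
    {c μ : ℂ} (hc : c ≠ 0) (hμ : μ ≠ 0) :
    Function.Bijective (fun E : Matrix (Fin n) (Fin n) ℂ =>
      trB (((1 : Matrix (Fin n) (Fin n) ℂ) ⊗ₖ E) *
        (c • ((1 : Matrix (Fin n) (Fin n) ℂ) ⊗ₖ (1 : Matrix (Fin n) (Fin n) ℂ)) +
          μ • ∑ i, X i ⊗ₖ Y i))) := by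
  let w : Option ι → ℂ := fun a => a.elim c fun _ => μ
  have hw : ∀ a, w a ≠ 0 := Option.forall.mpr ⟨hc, fun _ => hμ⟩
  have hτ : c • ((1 : Matrix (Fin n) (Fin n) ℂ) ⊗ₖ (1 : Matrix (Fin n) (Fin n) ℂ)) +
      μ • ∑ i, X i ⊗ₖ Y i = ∑ a, w a • adjoinOne X a ⊗ₖ adjoinOne Y a := by
    simp only [w, adjoinOne, Fintype.sum_option, Option.elim_none, Option.elim_some,
      Finset.smul_sum]
  have hX : LinearIndependent ℂ (adjoinOne X) :=
    linearIndependent_adjoinOne (by rwa [Fintype.card_fin]) hXspan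
  rw [hτ]
  have hinj := steeringMap_injective hX (span_adjoinOne_eq_top hYspan) hw
  exact ⟨hinj, LinearMap.injective_iff_surjective.mp hinj⟩

theorem robustifying_state_invertible {n : ℕ} (hn : 2 ≤ n)
    (X Y : Fin (n ^ 2 - 1) → Matrix (Fin n) (Fin n) ℂ)
    (hXherm : ∀ i, (X i).IsHermitian) (hXtr : ∀ i, (X i).trace = 0)
    (hYherm : ∀ i, (Y i).IsHermitian) (hYtr : ∀ i, (Y i).trace = 0)
    (hXon : ∀ i j, ((X i)ᴴ * X j).trace = if i = j then 1 else 0)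
    (hYon : ∀ i j, ((Y i)ᴴ * Y j).trace = if i = j then 1 else 0)
    (hXspan : ∀ H : Matrix (Fin n) (Fin n) ℂ, H.IsHermitian → H.trace = 0 →
      H ∈ Submodule.span ℝ (Set.range X))
    (hYspan : ∀ H : Matrix (Fin n) (Fin n) ℂ, H.IsHermitian → H.trace = 0 →
      H ∈ Submodule.span ℝ (Set.range Y))
    (μ : ℝ) (hμ : μ ≠ 0) :
    Function.Bijective (fun E : Matrix (Fin n) (Fin n) ℂ =>
      trB (((1 : Matrix (Fin n) (Fin n) ℂ) ⊗ₖ E) *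
        ((n : ℂ)⁻¹ • ((1 : Matrix (Fin n) (Fin n) ℂ) ⊗ₖ (1 : Matrix (Fin n) (Fin n) ℂ)) +
          (μ : ℂ) • ∑ i, X i ⊗ₖ Y i))) := by
  have hcard : Fintype.card (Fin (n ^ 2 - 1)) + 1 = n ^ 2 := by
    rw [Fintype.card_fin, Nat.sub_add_cancel (Nat.one_le_pow _ _ (by lia))]
  exact robustifying_state_invertible_general hcard X Y hXspan hYspan
    (inv_ne_zero (Nat.cast_ne_zero.mpr (by lia))) (Complex.ofReal_ne_zero.mpr hμ)
end
end
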